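/- The series G(t;1,0) = Σ_{n≥0} (Σ_{i≥0} g(n;i,0)) tⁿ and G(t;0,1) = Σ_{n≥0} (Σ_{j≥0} g(n;0,j)) tⁿ in ℚ[[t]], the generating functions of Gessel walks ending somewhere on the x-axis, respectively on the y-axis, are both algebraic: each is a root of a nonzero polynomial in T with coefficients in ℚ[t]. -/

import Mathlib

/-!
The proof uses Tutte invariants. Let `Q(x,y)` be the generating function of Gessel walks, with
coefficients in `ℚ[x,y]`. Splitting off the last step gives (`functional_equation`)

  `κ Q(x,y) = xy - t Q(x,0) - t(1+y) Q(0,y) + t Q(0,0)`,   `κ = xy - t(1+y)(x²y+1)`.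

Modulo `κ` the monomial `xy` decouples as `-1/x + y/(t(1+y))`, hence
`w(x) = 1/x + t Q(x,0)` and `J(y) = y/(t(1+y)) - t(1+y) Q(0,y) + t Q(0,0)` agree modulo `κ`. There is
also a pair of rational functions that agree modulo `κ`, namely
`I(x) = u/t - u²` with `u = x + 1/x`, and `K(y) = y/(t²(1+y)²) + y + 1/y - 2`.

For suitable `a, b` depending on `t` only, the combination `I w + w³ - a w² - b w` has no pole at
`x = 0`. Its counterpart `K J + J³ - a J² - b J` has no pole at `y = 0`, because `J(0) = 0`. Since
`κ` reduces to `xy` at `t = 0`, such a pair, agreeing modulo `κ`, must be constant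
(`invariant_lemma`, `const_of_agree`). So `w` and `J` satisfy the same cubic equation, in which
only the rational invariant depends on `x` or `y` (`cubic_equations`). The poles are cleared
throughout by working with `x w` (`serA`) and `t(1+y) J` (`serB`), with `α = t a` and `β = t b`.

At the critical points `x = 1` and `x = -1` of `I`, and `y = 1` of `K`, differentiating the cubic
equation shows that its root is a double root (`critical_values`). This gives six polynomial
equations in `w(1)`, `w(-1)`, `J(1)`, `α`, `β` and `γ` over `ℚ[t]`. Eliminating (`elimination`) leaves
an explicit polynomial equation for `d = w(1) - w(-1)`, so `d` is algebraic, and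
`G(t;0,1) = d³/8`, `2 + 2t G(t;1,0) = d + t d³/4`.
-/

noncomputable section

/-- The set of admissible steps for Gessel walks. -/
def gesselSteps : Set (ℤ × ℤ) := {(1, 0), (-1, 0), (1, 1), (-1, -1)}

/-- The position of the walk `w` after its first `k` steps. -/
def walkPos {n : ℕ} (w : Fin n → ℤ × ℤ) (k : ℕ) : ℤ × ℤ :=
  ∑ m ∈ Finset.univ.filter (fun m : Fin n => (m : ℕ) < k), w m

/-- `w` is a Gessel walk: every step is admissible and the walk (which starts at
the origin) never leaves the first quadrant. -/
def IsGesselWalk {n : ℕ} (w : Fin n → ℤ × ℤ) : Prop :=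
  (∀ m, w m ∈ gesselSteps) ∧ ∀ k ≤ n, 0 ≤ (walkPos w k).1 ∧ 0 ≤ (walkPos w k).2

/-- The number of Gessel walks of length `n` ending at `(i, j)`. -/
def g (n : ℕ) (i j : ℤ) : ℕ :=
  Nat.card {w : Fin n → ℤ × ℤ // IsGesselWalk w ∧ walkPos w n = (i, j)}

/-- The number of Gessel walks of length `n` ending somewhere on the x-axis,
i.e. `∑_{i ≥ 0} g(n;i,0)`. -/
def gesselXAxis (n : ℕ) : ℕ :=
  Nat.card {w : Fin n → ℤ × ℤ // IsGesselWalk w ∧ (walkPos w n).2 = 0}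

/-- The number of Gessel walks of length `n` ending somewhere on the y-axis,
i.e. `∑_{j ≥ 0} g(n;0,j)`. -/
def gesselYAxis (n : ℕ) : ℕ :=
  Nat.card {w : Fin n → ℤ × ℤ // IsGesselWalk w ∧ (walkPos w n).1 = 0}

/-- The generating function `G(t;1,0)` of Gessel walks ending on the x-axis. -/
def GesselGF10 : PowerSeries ℚ := PowerSeries.mk fun n => (gesselXAxis n : ℚ)

/-- The generating function `G(t;0,1)` of Gessel walks ending on the y-axis. -/
def GesselGF01 : PowerSeries ℚ := PowerSeries.mk fun n => (gesselYAxis n : ℚ)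

/-! ### Gessel walks and their last step -/

open Polynomial

/-- The four Gessel steps, as a finite set. -/
def stepFinset : Finset (ℤ × ℤ) := {(1, 0), (-1, 0), (1, 1), (-1, -1)}

lemma mem_stepFinset {s : ℤ × ℤ} : s ∈ stepFinset ↔ s ∈ gesselSteps := by
  simp [stepFinset, gesselSteps]

lemma finite_gesselWalks (n : ℕ) : {w : Fin n → ℤ × ℤ | IsGesselWalk w}.Finite := by
  refine (Set.Finite.pi' (t := fun _ : Fin n => (stepFinset : Set (ℤ × ℤ)))
    fun _ => stepFinset.finite_toSet).subset ?_
  intro w hw m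
  exact mem_stepFinset.2 (hw.1 m)

/-- The finite set of Gessel walks of length `n`. -/
def walks (n : ℕ) : Finset (Fin n → ℤ × ℤ) := (finite_gesselWalks n).toFinset

lemma mem_walks {n : ℕ} {w : Fin n → ℤ × ℤ} : w ∈ walks n ↔ IsGesselWalk w := by
  simp [walks]

lemma walkPos_snoc_of_le {n : ℕ} (w : Fin n → ℤ × ℤ) (s : ℤ × ℤ) {k : ℕ} (hk : k ≤ n) :
    walkPos (Fin.snoc w s : Fin (n + 1) → ℤ × ℤ) k = walkPos w k := by
  simp only [walkPos, Finset.sum_filter]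
  rw [Fin.sum_univ_castSucc]
  simp [Fin.snoc_castSucc, hk]

lemma walkPos_snoc_last {n : ℕ} (w : Fin n → ℤ × ℤ) (s : ℤ × ℤ) :
    walkPos (Fin.snoc w s : Fin (n + 1) → ℤ × ℤ) (n + 1) = walkPos w n + s := by
  simp only [walkPos, Finset.sum_filter]
  rw [Fin.sum_univ_castSucc]
  have h1 : ∀ i : Fin n, (i : ℕ) < n + 1 := fun i => by omega
  simp [Fin.snoc_castSucc, h1]

lemma isGesselWalk_snoc {n : ℕ} (w : Fin n → ℤ × ℤ) (s : ℤ × ℤ) :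
    IsGesselWalk (Fin.snoc w s : Fin (n + 1) → ℤ × ℤ) ↔
      IsGesselWalk w ∧ s ∈ gesselSteps ∧ 0 ≤ (walkPos w n + s).1 ∧ 0 ≤ (walkPos w n + s).2 := by
  constructor
  · rintro ⟨h1, h2⟩
    refine ⟨⟨fun m => by simpa using h1 m.castSucc, fun k hk => ?_⟩, by simpa using h1 (Fin.last n), ?_⟩
    · have := h2 k (by omega)
      rwa [walkPos_snoc_of_le w s hk] at this
    · have := h2 (n + 1) le_rfl
      rwa [walkPos_snoc_last] at this
  · rintro ⟨⟨h1, h2⟩, h3, h4⟩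
    refine ⟨fun m => ?_, fun k hk => ?_⟩
    · refine Fin.lastCases ?_ (fun i => ?_) m
      · simpa using h3
      · simpa using h1 i
    · rcases Nat.lt_or_ge n k with h | h
      · obtain rfl : k = n + 1 := by omega
        rwa [walkPos_snoc_last]
      · rw [walkPos_snoc_of_le w s h]
        exact h2 k h

/-- The sum of the weights `F (endpoint)` over all Gessel walks of length `n`. -/
def endSum {M : Type*} [AddCommMonoid M] (n : ℕ) (F : ℤ × ℤ → M) : M :=
  ∑ w ∈ walks n, F (walkPos w n)

lemma endSum_zero {M : Type*} [AddCommMonoid M] (F : ℤ × ℤ → M) : endSum 0 F = F (0, 0) := by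
  have h : walks 0 = {Fin.elim0} := by
    ext w
    have hw : w = Fin.elim0 := Subsingleton.elim _ _
    simp only [mem_walks, Finset.mem_singleton, hw, iff_true]
    exact ⟨fun m => m.elim0, fun k _ => by simp [walkPos]⟩
  rw [endSum, h, Finset.sum_singleton]
  simp [walkPos]
  rfl

/-- Removing the last step of a walk. -/
lemma endSum_succ {M : Type*} [AddCommMonoid M] (n : ℕ) (F : ℤ × ℤ → M) :
    endSum (n + 1) F = endSum n fun p =>
      ∑ s ∈ stepFinset, if 0 ≤ (p + s).1 ∧ 0 ≤ (p + s).2 then F (p + s) else 0 := by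
  simp only [endSum]
  rw [← Finset.sum_product', ← Finset.sum_filter
    (p := fun q : (Fin n → ℤ × ℤ) × (ℤ × ℤ) =>
      0 ≤ (walkPos q.1 n + q.2).1 ∧ 0 ≤ (walkPos q.1 n + q.2).2)
    (f := fun q => F (walkPos q.1 n + q.2))]
  refine Finset.sum_nbij' (fun w => (Fin.init w, w (Fin.last n)))
    (fun q => (Fin.snoc q.1 q.2 : Fin (n + 1) → ℤ × ℤ)) ?_ ?_ ?_ ?_ ?_
  · intro w hw
    rw [mem_walks, ← Fin.snoc_init_self w, isGesselWalk_snoc] at hw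
    simp only [Finset.mem_filter, Finset.mem_product, mem_walks, mem_stepFinset]
    exact ⟨⟨hw.1, hw.2.1⟩, hw.2.2⟩
  · intro q hq
    simp only [Finset.mem_filter, Finset.mem_product, mem_walks, mem_stepFinset] at hq
    rw [mem_walks, isGesselWalk_snoc]
    exact ⟨hq.1.1, hq.1.2, hq.2⟩
  · intro w _
    simp
  · intro q _
    simp
  · intro w _
    conv_lhs => rw [← Fin.snoc_init_self w]
    rw [walkPos_snoc_last]

lemma endSum_congr {M : Type*} [AddCommMonoid M] {n : ℕ} {F G : ℤ × ℤ → M}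
    (h : ∀ p : ℤ × ℤ, 0 ≤ p.1 → 0 ≤ p.2 → F p = G p) : endSum n F = endSum n G :=
  Finset.sum_congr rfl fun _ hw => h _ ((mem_walks.1 hw).2 n le_rfl).1 ((mem_walks.1 hw).2 n le_rfl).2

lemma map_endSum {M N Φ : Type*} [AddCommMonoid M] [AddCommMonoid N] [FunLike Φ M N]
    [AddMonoidHomClass Φ M N] (φ : Φ) (n : ℕ) (F : ℤ × ℤ → M) :
    φ (endSum n F) = endSum n fun p => φ (F p) :=
  map_sum φ _ _

lemma gesselXAxis_eq (n : ℕ) :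
    (gesselXAxis n : ℚ) = endSum n fun p => if p.2 = 0 then (1 : ℚ) else 0 := by
  rw [endSum, Finset.sum_boole, gesselXAxis]
  congr 1
  exact Nat.subtype_card _ (by simp [mem_walks])

lemma gesselYAxis_eq (n : ℕ) :
    (gesselYAxis n : ℚ) = endSum n fun p => if p.1 = 0 then (1 : ℚ) else 0 := by
  rw [endSum, Finset.sum_boole, gesselYAxis]
  congr 1
  exact Nat.subtype_card _ (by simp [mem_walks])

/-! ### Polynomials counting walks by endpoint -/

/-- The polynomial `∑ x^i y^j` over the Gessel walks of length `n` (ending at `(i, j)`); the inner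
variable of `ℚ[X][X]` is `x`, the outer one is `y`. -/
def fullPoly (n : ℕ) : ℚ[X][X] := endSum n fun p => C (X ^ p.1.toNat) * X ^ p.2.toNat

/-- The polynomial `∑ x^i` over the Gessel walks of length `n` ending on the x-axis. -/
def xPoly (n : ℕ) : ℚ[X] := endSum n fun p => if p.2 = 0 then X ^ p.1.toNat else 0

/-- The polynomial `∑ y^j` over the Gessel walks of length `n` ending on the y-axis. -/
def yPoly (n : ℕ) : ℚ[X] := endSum n fun p => if p.1 = 0 then X ^ p.2.toNat else 0

/-- The number of Gessel walks of length `n` ending at the origin. -/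
def originCount (n : ℕ) : ℚ := endSum n fun p => if p.1 = 0 ∧ p.2 = 0 then 1 else 0

lemma xPoly_eval_zero (n : ℕ) : (xPoly n).eval 0 = originCount n := by
  rw [← Polynomial.coe_evalRingHom, xPoly, map_endSum, originCount]
  refine endSum_congr fun p h1 h2 => ?_
  obtain ⟨i, j⟩ := p
  lift i to ℕ using h1
  lift j to ℕ using h2
  rcases i with _ | i <;> rcases j with _ | j <;>
    simp [show ∀ k : ℕ, (k : ℤ) + 1 ≠ 0 from fun k => by omega]

lemma yPoly_eval_zero (n : ℕ) : (yPoly n).eval 0 = originCount n := by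
  rw [← Polynomial.coe_evalRingHom, yPoly, map_endSum, originCount]
  refine endSum_congr fun p h1 h2 => ?_
  obtain ⟨i, j⟩ := p
  lift i to ℕ using h1
  lift j to ℕ using h2
  rcases i with _ | i <;> rcases j with _ | j <;>
    simp [show ∀ k : ℕ, (k : ℤ) + 1 ≠ 0 from fun k => by omega]

lemma xPoly_eval_one (n : ℕ) : (xPoly n).eval 1 = gesselXAxis n := by
  rw [← Polynomial.coe_evalRingHom, xPoly, map_endSum, gesselXAxis_eq]
  refine endSum_congr fun p _ _ => ?_
  split_ifs <;> simp

lemma yPoly_eval_one (n : ℕ) : (yPoly n).eval 1 = gesselYAxis n := by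
  rw [← Polynomial.coe_evalRingHom, yPoly, map_endSum, gesselYAxis_eq]
  refine endSum_congr fun p _ _ => ?_
  split_ifs <;> simp

lemma fullPoly_zero : fullPoly 0 = 1 := by simp [fullPoly, endSum_zero]

lemma endSum_add {M : Type*} [AddCommMonoid M] (n : ℕ) (F G : ℤ × ℤ → M) :
    endSum n (fun p => F p + G p) = endSum n F + endSum n G := Finset.sum_add_distrib

lemma endSum_mul {M : Type*} [Semiring M] (n : ℕ) (a : M) (F : ℤ × ℤ → M) :
    endSum n (fun p => a * F p) = a * endSum n F := (Finset.mul_sum _ _ _).symm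

/-- The step-by-step construction of Gessel walks, multiplied by `xy`. The terms `xPoly`, `yPoly` and
`originCount` account for the steps that would leave the quadrant. -/
lemma fullPoly_succ (n : ℕ) :
    C X * X * fullPoly (n + 1) + C (xPoly n) + (1 + X) * (yPoly n).map C =
      (1 + X) * (C X ^ 2 * X + 1) * fullPoly n + C (C (originCount n)) := by
  have e1 : C (xPoly n) = endSum n fun p => C (if p.2 = 0 then (X : ℚ[X]) ^ p.1.toNat else 0) :=
    map_endSum (C : ℚ[X] →+* ℚ[X][X]) n _
  have e2 : (yPoly n).map C =
      endSum n fun p => (if p.1 = 0 then (X : ℚ[X]) ^ p.2.toNat else 0).map C :=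
    map_endSum (mapRingHom (C : ℚ →+* ℚ[X])) n _
  have e3 : C (C (originCount n)) =
      endSum n fun p => (C (C (if p.1 = 0 ∧ p.2 = 0 then (1 : ℚ) else 0)) : ℚ[X][X]) :=
    map_endSum ((C : ℚ[X] →+* ℚ[X][X]).comp C) n _
  rw [e1, e2, e3, fullPoly, fullPoly, endSum_succ]
  simp only [← endSum_mul, ← endSum_add]
  refine endSum_congr fun p h1 h2 => ?_
  obtain ⟨i, j⟩ := p
  lift i to ℕ using h1
  lift j to ℕ using h2
  have a1 : ∀ k : ℕ, ((k : ℤ) + 1 + 1).toNat = k + 2 := fun k => by omega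
  have a2 : ∀ k : ℕ, ((k : ℤ) + 1).toNat = k + 1 := fun k => by omega
  have a3 : ∀ k : ℕ, (0 : ℤ) ≤ (k : ℤ) + 1 + 1 := fun k => by omega
  have a4 : ∀ k : ℕ, (0 : ℤ) ≤ (k : ℤ) + 1 := fun k => by omega
  have a5 : ∀ k : ℕ, (k : ℤ) + 1 ≠ 0 := fun k => by omega
  rcases i with _ | i <;> rcases j with _ | j <;>
    simp [stepFinset, a1, a2, a3, a4, a5] <;> ring

/-! ### Generating functions and the kernel -/

open PowerSeries (mk map)

/-- Power series in `t` whose coefficients are polynomials in one variable. -/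
abbrev Ser1 := PowerSeries ℚ[X]

/-- Power series in `t` whose coefficients are polynomials in `x` and `y`. -/
abbrev Ser2 := PowerSeries ℚ[X][X]

/-- A series in `t` and `x` seen as a series in `t`, `x`, `y`. -/
def inX : Ser1 →+* Ser2 := map C

/-- A series in `t` and `y` seen as a series in `t`, `x`, `y`. -/
def inY : Ser1 →+* Ser2 := map (mapRingHom C)

/-- A series in `t` seen as a series with constant polynomials as coefficients. -/
def inC : PowerSeries ℚ →+* Ser1 := map C

/-- Evaluation at `a` of the polynomial variable. -/
def evalAt (a : ℚ) : Ser1 →+* PowerSeries ℚ := map (evalRingHom a)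

/-- The length variable `t` in `Ser1`. -/
def t₁ : Ser1 := PowerSeries.X

/-- The polynomial variable in `Ser1`. -/
def x₁ : Ser1 := PowerSeries.C X

/-- The length variable `t` in `Ser2`. -/
def t₂ : Ser2 := PowerSeries.X

/-- The variable `x` in `Ser2`. -/
def x₂ : Ser2 := PowerSeries.C (C X)

/-- The variable `y` in `Ser2`. -/
def y₂ : Ser2 := PowerSeries.C X

lemma inX_t : inX t₁ = t₂ := by simp [inX, t₁, t₂]
lemma inX_x : inX x₁ = x₂ := by simp [inX, x₁, x₂]
lemma inY_t : inY t₁ = t₂ := by simp [inY, t₁, t₂]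
lemma inY_y : inY x₁ = y₂ := by simp [inY, x₁, y₂]
lemma inC_t : inC PowerSeries.X = t₁ := by simp [inC, t₁]
lemma evalAt_t (a : ℚ) : evalAt a t₁ = PowerSeries.X := by simp [evalAt, t₁]
lemma evalAt_x (a : ℚ) : evalAt a x₁ = PowerSeries.C a := by simp [evalAt, x₁]
lemma evalAt_inC (a : ℚ) (f : PowerSeries ℚ) : evalAt a (inC f) = f := by
  ext n; simp [evalAt, inC]
lemma inY_inC (f : PowerSeries ℚ) : inY (inC f) = inX (inC f) := by
  ext1 n; simp [inX, inY, inC]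

/-- The kernel `xy (1 - t S(x,y))`, where `S = x + 1/x + xy + 1/(xy)` is the step polynomial. -/
def kernel : Ser2 := x₂ * y₂ - t₂ * ((1 + y₂) * (x₂ ^ 2 * y₂ + 1))

/-- The generating function of all Gessel walks. -/
def serQ : Ser2 := mk fullPoly

/-- The generating function `Q(x,0)` of walks ending on the x-axis. -/
def serX : Ser1 := mk xPoly

/-- The generating function `Q(0,y)` of walks ending on the y-axis. -/
def serY : Ser1 := mk yPoly

/-- The generating function `Q(0,0)` of walks ending at the origin. -/
def serO : PowerSeries ℚ := mk originCount

/-- The functional equation obtained by removing the last step of a walk. -/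
lemma functional_equation :
    kernel * serQ = x₂ * y₂ - t₂ * inX serX - t₂ * (1 + y₂) * inY serY + t₂ * inX (inC serO) := by
  have key : x₂ * y₂ * serQ + t₂ * (inX serX + (1 + y₂) * inY serY) =
      x₂ * y₂ + t₂ * ((1 + y₂) * (x₂ ^ 2 * y₂ + 1) * serQ + inX (inC serO)) := by
    have hxy : x₂ * y₂ = PowerSeries.C (C X * X) := by simp [x₂, y₂]
    have hy : (1 + y₂) = PowerSeries.C (1 + X) := by simp [y₂]
    have hT : (1 + y₂) * (x₂ ^ 2 * y₂ + 1) = PowerSeries.C ((1 + X) * (C X ^ 2 * X + 1)) := by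
      simp [x₂, y₂]
    rw [hT, hy, hxy, t₂]
    ext1 n
    have step := fullPoly_succ
    generalize (1 + X : ℚ[X][X]) = u at step ⊢
    rcases n with _ | n
    · simp [serQ, fullPoly_zero]
    · simp only [map_add, PowerSeries.coeff_succ_X_mul, PowerSeries.coeff_C_mul, PowerSeries.coeff_C]
      simp only [serQ, serX, serY, serO, inX, inY, inC, PowerSeries.coeff_map, PowerSeries.coeff_mk]
      simp only [coe_mapRingHom]
      rw [if_neg (Nat.succ_ne_zero n), zero_add, ← step n]
      ring
  rw [kernel]
  linear_combination key

/-! ### Cancelling poles modulo the kernel, and the invariant lemma -/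

/-- Splitting off the value at `0` of the polynomial variable. -/
lemma exists_eq_inC_add (f : Ser1) : ∃ h : Ser1, f = inC (evalAt 0 f) + x₁ * h := by
  refine ⟨mk fun n => (PowerSeries.coeff n f).divX, ?_⟩
  ext1 n
  simp only [inC, evalAt, x₁, map_add, PowerSeries.coeff_map, PowerSeries.coeff_C_mul,
    PowerSeries.coeff_mk, coe_evalRingHom]
  conv_lhs => rw [← X_mul_divX_add (PowerSeries.coeff n f)]
  rw [add_comm, coeff_zero_eq_eval_zero]

lemma dvd_iff_coeff (p : ℚ[X][X]) (f : Ser2) :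
    PowerSeries.C p ∣ f ↔ ∀ n, p ∣ PowerSeries.coeff n f := by
  constructor
  · rintro ⟨h, rfl⟩ n
    simp
  · intro h
    choose c hc using h
    exact ⟨mk c, by ext1 n; simp [hc]⟩

/-- A prime `p` that divides `xy`, but not `(1 + y)(x²y + 1)`, can be cancelled from a multiple of
the kernel: the quotient of the multiple by the kernel must itself be divisible by `p`. -/
lemma kernel_cancel {p : ℚ[X][X]} (hp : Prime p) (hxy : p ∣ C X * X)
    (hT : ¬ p ∣ (1 + X) * (C X ^ 2 * X + 1)) {Z M : Ser2}
    (h : PowerSeries.C p * Z = kernel * M) : ∃ M', Z = kernel * M' := by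
  have hM : PowerSeries.C p ∣ M := by
    rw [dvd_iff_coeff]
    intro n
    have hk : kernel = PowerSeries.C (C X * X) -
        PowerSeries.X * PowerSeries.C ((1 + X) * (C X ^ 2 * X + 1)) := by
      simp [kernel, x₂, y₂, t₂]
    have h1 := congrArg (PowerSeries.coeff (n + 1)) h
    rw [hk, sub_mul, mul_assoc PowerSeries.X, map_sub, PowerSeries.coeff_succ_X_mul,
      PowerSeries.coeff_C_mul, PowerSeries.coeff_C_mul, PowerSeries.coeff_C_mul] at h1
    have h2 : p ∣ (1 + X) * (C X ^ 2 * X + 1) * PowerSeries.coeff n M := by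
      have h3 : (1 + X) * (C X ^ 2 * X + 1) * PowerSeries.coeff n M =
          C X * X * PowerSeries.coeff (n + 1) M - p * PowerSeries.coeff (n + 1) Z := by
        rw [h1]; ring
      rw [h3]
      exact dvd_sub (hxy.mul_right _) (dvd_mul_right _ _)
    exact (hp.dvd_or_dvd h2).resolve_left hT
  obtain ⟨M', rfl⟩ := hM
  have hp0 : (PowerSeries.C p : Ser2) ≠ 0 := by
    intro h0
    exact hp.ne_zero ((map_eq_zero_iff _ PowerSeries.C_injective).1 h0)
  exact ⟨M', mul_left_cancel₀ hp0 (by rw [h]; ring)⟩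

lemma kernel_cancel_x {Z M : Ser2} (h : x₂ * Z = kernel * M) : ∃ M', Z = kernel * M' := by
  refine kernel_cancel (prime_C_iff.2 prime_X) (dvd_mul_right _ _) ?_ h
  intro hd
  have := (mapRingHom (evalRingHom (0 : ℚ))).map_dvd hd
  simp at this
  have h2 := congrArg (Polynomial.eval 0) this
  simp at h2

lemma kernel_cancel_y {Z M : Ser2} (h : y₂ * Z = kernel * M) : ∃ M', Z = kernel * M' := by
  refine kernel_cancel prime_X (dvd_mul_left _ _) ?_ h
  intro hd
  have := (evalRingHom (0 : ℚ[X])).map_dvd hd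
  simp at this

/-- The invariant lemma: if, up to a power of `1 + y`, a series in `x` and a series in `y` agree
modulo the kernel, then they agree. The reason is that the kernel reduces to `xy` at `t = 0`, and
`xy` divides no nonzero polynomial of the form `(1 + y)³ p(x) - q(y)`. -/
lemma invariant_lemma {P Q : Ser1} {M : Ser2}
    (h : (1 + y₂) ^ 3 * inX P - inY Q = kernel * M) : (1 + y₂) ^ 3 * inX P = inY Q := by
  have hk : kernel = PowerSeries.C (C X * X) -
      PowerSeries.X * PowerSeries.C ((1 + X) * (C X ^ 2 * X + 1)) := by
    simp [kernel, x₂, y₂, t₂]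
  have hy : ((1 + y₂) ^ 3 : Ser2) = PowerSeries.C ((1 + X) ^ 3) := by simp [y₂]
  -- setting `y = 0` shows that `p` is constant, and then setting `x = 0` that `q = (1 + y)³ p`
  have hz : ∀ (p q : ℚ[X]) (m : ℚ[X][X]), (1 + X) ^ 3 * C p - q.map C = C X * X * m → m = 0 := by
    intro p q m e
    have e1 := congrArg (Polynomial.eval 0) e
    have e2 := congrArg (Polynomial.map (evalRingHom (0 : ℚ))) e
    simp [Polynomial.map_map] at e1 e2
    have e3 : p = C (q.eval 0) := sub_eq_zero.1 e1
    have e4 : ((evalRingHom (0:ℚ)).comp (C : ℚ →+* ℚ[X])) = RingHom.id ℚ := by ext; simp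
    rw [e4, Polynomial.map_id, e3, eval_C, sub_eq_zero] at e2
    have e5 : C X * X * m = 0 := by
      rw [← e, e3]
      generalize q.eval 0 = c at e2
      rw [← e2]
      simp
    simpa using e5
  have hM : M = 0 := by
    ext1 n
    rw [map_zero]
    induction n using Nat.strong_induction_on with
    | _ n ih =>
      have h1 := congrArg (PowerSeries.coeff n) h
      refine hz (PowerSeries.coeff n P) (PowerSeries.coeff n Q) _ ?_
      rw [hk, hy, sub_mul, mul_assoc PowerSeries.X, map_sub, map_sub] at h1
      have h0 : PowerSeries.coeff n (PowerSeries.X *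
          (PowerSeries.C ((1 + X) * (C X ^ 2 * X + 1)) * M)) = 0 := by
        rcases n with _ | n
        · simp
        · rw [PowerSeries.coeff_succ_X_mul, PowerSeries.coeff_C_mul, ih n (by omega), mul_zero]
      rw [h0, sub_zero, PowerSeries.coeff_C_mul, PowerSeries.coeff_C_mul] at h1
      rw [← h1]
      simp [inX, inY]
  rw [hM, mul_zero, sub_eq_zero] at h
  exact h

/-- A series satisfying the conclusion of `invariant_lemma` does not depend on `x`, and it determines
the series in `y`. -/
lemma const_of_agree {P Q : Ser1} (h : (1 + y₂) ^ 3 * inX P = inY Q) :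
    P = inC (evalAt 0 Q) ∧ Q = (1 + x₁) ^ 3 * P := by
  have hy : ((1 + y₂) ^ 3 : Ser2) = PowerSeries.C ((1 + X) ^ 3) := by simp [y₂]
  have hP : P = inC (evalAt 0 Q) := by
    ext1 n
    have h1 := congrArg (fun f => (PowerSeries.coeff n f).eval 0) h
    simp only [hy, PowerSeries.coeff_C_mul, inX, inY, PowerSeries.coeff_map] at h1
    simp [inC, evalAt] at h1 ⊢
    exact h1
  refine ⟨hP, ?_⟩
  have hinj : Function.Injective inY :=
    PowerSeries.map_injective _ (Polynomial.map_injective _ C_injective)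
  apply hinj
  rw [← h, map_mul, map_pow, map_add, map_one, inY_y, hP, inY_inC]

/-! ### The cubic equation satisfied by both invariants -/

/-- The cubic combination of the two pairs of invariants is divisible by the kernel once all its
poles are cleared. Here `U = t(1 + y)A` and `V = xB` agree modulo the kernel `κ`, and so do the
two sides of the rational invariant. -/
lemma invariant_combination {R : Type*} [CommRing R] {x y t A B B' P α β E κ : R}
    (hκ : κ = x * y - t * ((1 + y) * (x ^ 2 * y + 1)))
    (hU : t * (1 + y) * A - x * B = -κ * E)
    (hP : x ^ 3 * P = (x * (x ^ 2 + 1) - t * (x ^ 2 + 1) ^ 2) * A + t * A ^ 3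
      - α * x * A ^ 2 - β * x ^ 2 * A)
    (hB : B = y * B') :
    x * (x * (x * (y * ((1 + y) ^ 3 * (t ^ 2 * P)
      - ((y ^ 2 + t ^ 2 * (1 - y ^ 2) ^ 2) * B' + B ^ 3 - α * (1 + y) * B ^ 2
        - t * β * (1 + y) ^ 2 * B))))) =
      κ * ((t * (1 + y) * (x ^ 2 + y) - x * y) * (t * (1 + y) * A)
        - E * (x ^ 2 * (y ^ 2 + t ^ 2 * (1 - y ^ 2) ^ 2)
          + y * ((t * (1 + y) * A) ^ 2 + t * (1 + y) * A * (x * B) + (x * B) ^ 2)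
          - α * x * y * (1 + y) * (t * (1 + y) * A + x * B)
          - β * t * (1 + y) ^ 2 * y * x ^ 2)) := by
  have hκE : κ * E = x * B - t * (1 + y) * A := by linear_combination hU
  have e : ∀ m n : R, κ * (m - E * n) = κ * m - (x * B - t * (1 + y) * A) * n := by
    intro m n
    rw [← hκE]; ring
  rw [e, hκ]
  linear_combination (t ^ 2 * (1 + y) ^ 3 * y) * hP
    + (x ^ 3 * (y ^ 2 + t ^ 2 * (1 - y ^ 2) ^ 2)) * hB

/-- `1 + x t Q(x,0)`, that is, `x` times the invariant `1/x + t Q(x,0)`. -/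
def serA : Ser1 := 1 + x₁ * (t₁ * serX)

/-- `y - t(1 + y)(t(1 + y) Q(0,y) - t Q(0,0))`, that is, `t(1 + y)` times the invariant of `y` paired
with `1/x + t Q(x,0)`. -/
def serB : Ser1 := x₁ - t₁ * (1 + x₁) * (t₁ * (1 + x₁) * serY - t₁ * inC serO)

/-- The functional equation says that the two invariants agree modulo the kernel. -/
lemma invariants_agree :
    t₂ * (1 + y₂) * inX serA - x₂ * inY serB = -kernel * (1 + t₂ * (1 + y₂) * x₂ * serQ) := by
  have h := functional_equation
  simp only [serA, serB, map_add, map_sub, map_mul, map_one, inX_t, inX_x, inY_t, inY_y, inY_inC]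
  have e : -kernel * (1 + t₂ * (1 + y₂) * x₂ * serQ) =
      -kernel - t₂ * (1 + y₂) * x₂ * (kernel * serQ) := by ring
  rw [e, h, kernel]
  ring

lemma evalAt_zero_serX : evalAt 0 serX = serO := by
  ext n; simp [evalAt, serX, serO, xPoly_eval_zero]

lemma evalAt_zero_serY : evalAt 0 serY = serO := by
  ext n; simp [evalAt, serY, serO, yPoly_eval_zero]

lemma t₁_ne_zero : t₁ ≠ 0 := PowerSeries.X_ne_zero

/-- Both invariants are roots of the same cubic polynomial, whose coefficients depend on `t` only
(apart from the rational invariant). -/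
lemma cubic_equations : ∃ α β γ : PowerSeries ℚ,
    α = 1 + 2 * PowerSeries.X ^ 2 * serO ∧
    (x₁ * (x₁ ^ 2 + 1) - t₁ * (x₁ ^ 2 + 1) ^ 2) * serA + t₁ * serA ^ 3
      - inC α * x₁ * serA ^ 2 - inC β * x₁ ^ 2 * serA = inC γ * x₁ ^ 3 ∧
    (x₁ ^ 2 + t₁ ^ 2 * (1 - x₁ ^ 2) ^ 2) * serB + x₁ * serB ^ 3
      - inC α * (1 + x₁) * x₁ * serB ^ 2 - t₁ * inC β * (1 + x₁) ^ 2 * x₁ * serB =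
      t₁ ^ 2 * inC γ * x₁ * (1 + x₁) ^ 3 := by
  obtain ⟨h0, e0⟩ := exists_eq_inC_add serX
  obtain ⟨h1, e1⟩ := exists_eq_inC_add h0
  obtain ⟨k, ek⟩ := exists_eq_inC_add serY
  rw [evalAt_zero_serX] at e0
  rw [evalAt_zero_serY] at ek
  -- `z + z₁ x + h₁ x²` is the expansion of `Q(x,0)` at `x = 0`
  set z := serO
  set z₁ := evalAt 0 h0
  -- chosen so that the polar part of the combination at `x = 0` vanishes
  let α : PowerSeries ℚ := 1 + 2 * PowerSeries.X ^ 2 * z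
  let β : PowerSeries ℚ := -2 * PowerSeries.X - PowerSeries.X * z
    + 2 * PowerSeries.X ^ 2 * z₁ - PowerSeries.X ^ 3 * z ^ 2
  have two : inC 2 = 2 := map_ofNat inC 2
  have hα : inC α = 1 + 2 * t₁ ^ 2 * inC z := by simp [α, inC_t, two]
  have hβ : inC β = -2 * t₁ - t₁ * inC z + 2 * t₁ ^ 2 * inC z₁ - t₁ ^ 3 * inC z ^ 2 := by
    simp [β, inC_t, two]
  let v : Ser1 := t₁ * inC z₁ + x₁ * (t₁ * h1)
  let u : Ser1 := t₁ * inC z + x₁ * v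
  have hA : serA = 1 + x₁ * u := by
    rw [serA, e0, e1]; simp only [u, v]; ring
  -- the quotient by `x³` of the left-hand side of the first equation
  let P : Ser1 := -t₁ * (t₁ * h1) + v - 2 * t₁ * u + (1 - t₁ * x₁) * serA
    + t₁ * (3 * (t₁ * h1) + 3 * (2 * (t₁ * inC z) * v + x₁ * v ^ 2) + u ^ 3)
    - inC α * (2 * v + u ^ 2) - inC β * u
  have hP : x₁ ^ 3 * P = (x₁ * (x₁ ^ 2 + 1) - t₁ * (x₁ ^ 2 + 1) ^ 2) * serA + t₁ * serA ^ 3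
      - inC α * x₁ * serA ^ 2 - inC β * x₁ ^ 2 * serA := by
    simp only [P]
    rw [hα, hβ, hA]
    simp only [u, v]
    ring
  let B' : Ser1 := 1 - t₁ ^ 2 * (1 + x₁) * (inC z + (1 + x₁) * k)
  have hB : serB = x₁ * B' := by
    rw [serB, ek]; simp only [B']; ring
  have hP₂ := congrArg inX hP
  have hB₂ := congrArg inY hB
  simp only [map_add, map_sub, map_mul, map_pow, map_one, inX_t, inX_x, inY_y] at hP₂ hB₂
  -- divisibility by the kernel persists after cancelling `x³y`
  obtain ⟨M, hM⟩ := kernel_cancel_x (invariant_combination rfl invariants_agree hP₂ hB₂)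
  obtain ⟨M, hM⟩ := kernel_cancel_x hM
  obtain ⟨M, hM⟩ := kernel_cancel_x hM
  obtain ⟨M, hM⟩ := kernel_cancel_y hM
  let Q : Ser1 := (x₁ ^ 2 + t₁ ^ 2 * (1 - x₁ ^ 2) ^ 2) * B' + serB ^ 3
    - inC α * (1 + x₁) * serB ^ 2 - t₁ * inC β * (1 + x₁) ^ 2 * serB
  have hPQ : (1 + y₂) ^ 3 * inX (t₁ ^ 2 * P) - inY Q = kernel * M := by
    rw [← hM]
    simp only [Q, map_add, map_sub, map_mul, map_pow, map_one, inX_t, inY_t, inY_y, inY_inC]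
  obtain ⟨hc, hQ⟩ := const_of_agree (invariant_lemma hPQ)
  have hγ : P = inC (evalAt 0 P) := by
    have h2 := congrArg (fun f => inC (evalAt 0 f)) hc
    simp only [evalAt_inC] at h2
    rw [← hc, map_mul, map_mul, map_pow, map_pow, evalAt_t, inC_t] at h2
    exact (mul_left_cancel₀ (pow_ne_zero 2 t₁_ne_zero) h2).symm
  refine ⟨α, β, evalAt 0 P, rfl, ?_, ?_⟩
  · rw [← hP, ← hγ]; ring
  · rw [← hγ]
    simp only [Q] at hQ
    linear_combination x₁ * hQ + (x₁ ^ 2 + t₁ ^ 2 * (1 - x₁ ^ 2) ^ 2) * hB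

/-! ### Critical points of the rational invariants -/

/-- Coefficientwise differentiation with respect to the polynomial variable. -/
def dx : Derivation ℚ Ser1 Ser1 :=
  Derivation.mk' (
    { toFun := fun f => mk fun n => derivative (PowerSeries.coeff n f)
      map_add' := fun f h => by ext1 n; simp
      map_smul' := fun a f => by ext1 n; simp } : Ser1 →ₗ[ℚ] Ser1) (by
    intro f h
    ext1 n
    simp only [LinearMap.coe_mk, AddHom.coe_mk, PowerSeries.coeff_mk, PowerSeries.coeff_mul,
      derivative_sum, derivative_mul, smul_eq_mul, map_add, Finset.sum_add_distrib]
    rw [add_comm]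
    congr 1
    rw [← Finset.Nat.sum_antidiagonal_swap]
    exact Finset.sum_congr rfl fun p _ => by simp [mul_comm])

lemma dx_apply (f : Ser1) (n : ℕ) :
    PowerSeries.coeff n (dx f) = derivative (PowerSeries.coeff n f) := by
  simp [dx]

lemma dx_inC (f : PowerSeries ℚ) : dx (inC f) = 0 := by
  ext1 n; simp [dx_apply, inC]

lemma dx_t : dx t₁ = 0 := by rw [← inC_t, dx_inC]

lemma dx_x : dx x₁ = 1 := by
  ext1 n
  rw [dx_apply, x₁, PowerSeries.coeff_C, PowerSeries.coeff_one]
  split_ifs <;> simp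

local notation "τ" => (PowerSeries.X : PowerSeries ℚ)

lemma constantCoeff_ne_zero {f : PowerSeries ℚ} (h : PowerSeries.constantCoeff f ≠ 0) : f ≠ 0 :=
  fun h0 => h (by rw [h0, map_zero])

/-- At the critical points `x = 1`, `x = -1`, `y = 1` of the rational invariants, the values of the
two series are double roots of the cubic. Here `w = w(1)`, `m = -w(-1)` and `v = 2t J(1)` in terms of
the invariants `w(x) = A/x` and `J(y) = B/(t(1+y))`; each pair of equations below is the cubic
followed by its derivative. -/
lemma critical_values : ∃ α β γ w m v : PowerSeries ℚ,
    α = 1 + 2 * τ ^ 2 * serO ∧ w = 1 + τ * evalAt 1 serX ∧ m = 1 - τ * evalAt (-1) serX ∧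
    v = 1 - 4 * τ ^ 2 * evalAt 1 serY + 2 * τ ^ 2 * serO ∧
    (2 - 4 * τ) * w + τ * w ^ 3 - α * w ^ 2 - β * w = γ ∧
    2 - 4 * τ + 3 * τ * w ^ 2 - 2 * α * w - β = 0 ∧
    (-2 - 4 * τ) * m + τ * m ^ 3 + α * m ^ 2 - β * m = -γ ∧
    -2 - 4 * τ + 3 * τ * m ^ 2 + 2 * α * m - β = 0 ∧
    v + v ^ 3 - 2 * α * v ^ 2 - 4 * τ * β * v = 8 * τ ^ 2 * γ ∧
    1 + 3 * v ^ 2 - 4 * α * v - 4 * τ * β = 0 := by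
  obtain ⟨α, β, γ, hα, hA, hB⟩ := cubic_equations
  have dA := congrArg dx hA
  have dB := congrArg dx hB
  have hA1 : dx serA = t₁ * serX + x₁ * (t₁ * dx serX) := by
    simp [serA, Derivation.leibniz, dx_t, dx_x]; ring
  have hB1 : dx serB = 1 - t₁ * (t₁ * (1 + x₁) * serY - t₁ * inC serO)
      - t₁ * (1 + x₁) * (t₁ * serY + t₁ * (1 + x₁) * dx serY) := by
    simp [serB, Derivation.leibniz, dx_t, dx_x, dx_inC]; ring
  simp only [map_add, map_sub, Derivation.leibniz, Derivation.leibniz_pow, dx_t, dx_x, dx_inC,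
    Derivation.map_one_eq_zero, smul_eq_mul, nsmul_eq_mul] at dA dB
  have a1 := congrArg (evalAt 1) hA
  have a2 := congrArg (evalAt (-1)) hA
  have a3 := congrArg (evalAt 1) hB
  have d1 := congrArg (evalAt 1) dA
  have d2 := congrArg (evalAt (-1)) dA
  have d3 := congrArg (evalAt 1) dB
  have n1 := congrArg (evalAt 1) hA1
  have n2 := congrArg (evalAt (-1)) hA1
  have n3 := congrArg (evalAt 1) hB1
  simp only [map_add, map_sub, map_mul, map_pow, map_one, map_zero, map_neg, map_natCast,
    evalAt_t, evalAt_x, evalAt_inC] at a1 a2 a3 d1 d2 d3 n1 n2 n3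
  have w1 : evalAt 1 serA = 1 + τ * evalAt 1 serX := by
    simp [serA, evalAt_x, evalAt_t]
  have w2 : evalAt (-1) serA = 1 - τ * evalAt (-1) serX := by
    simp [serA, evalAt_x, evalAt_t]; ring
  have w3 : evalAt 1 serB = 1 - 4 * τ ^ 2 * evalAt 1 serY + 2 * τ ^ 2 * serO := by
    simp [serB, evalAt_x, evalAt_t, evalAt_inC]; ring
  refine ⟨α, β, γ, evalAt 1 serA, evalAt (-1) serA, evalAt 1 serB, hα, w1, w2, w3, ?_, ?_, ?_, ?_,
    ?_, ?_⟩
  · linear_combination a1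
  · -- the cubic in `w = A/x` is differentiated: its derivative in `w` is multiplied by `dw/dx` at `1`
    have hne : evalAt 1 (dx serA) - evalAt 1 serA ≠ 0 := by
      apply constantCoeff_ne_zero
      rw [n1, w1]; simp
    refine (mul_eq_zero.1 (?_ : (evalAt 1 (dx serA) - evalAt 1 serA) * _ = 0)).resolve_left hne
    linear_combination d1 - 3 * a1
  · linear_combination a2
  · have hne : evalAt (-1) (dx serA) + evalAt (-1) serA ≠ 0 := by
      apply constantCoeff_ne_zero
      rw [n2, w2]; simp
    refine (mul_eq_zero.1 (?_ : (evalAt (-1) (dx serA) + evalAt (-1) serA) * _ = 0)).resolve_left hne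
    linear_combination d2 + 3 * a2
  · linear_combination a3
  · have hne : 2 * evalAt 1 (dx serB) - evalAt 1 serB ≠ 0 := by
      apply constantCoeff_ne_zero
      have two : PowerSeries.constantCoeff (2 : PowerSeries ℚ) = 2 := map_ofNat _ 2
      rw [n3, w3]; simp [two]; norm_num
    refine (mul_eq_zero.1 (?_ : (2 * evalAt 1 (dx serB) - evalAt 1 serB) * _ = 0)).resolve_left hne
    linear_combination 2 * d3 - 5 * a3

/-! ### Elimination -/

/-- Elimination of the coefficients `α, β, γ` of the cubic: the difference `d` of two critical
points and their sum `s` satisfy `4s = t d³`, and `d` is a root of an explicit polynomial. -/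
lemma elimination {K : Type*} [CommRing K] [IsDomain K] {t α β γ w m v : K} (ht : t ≠ 0)
    (h1 : (2 - 4 * t) * w + t * w ^ 3 - α * w ^ 2 - β * w = γ)
    (h1' : 2 - 4 * t + 3 * t * w ^ 2 - 2 * α * w - β = 0)
    (h2 : (-2 - 4 * t) * m + t * m ^ 3 + α * m ^ 2 - β * m = -γ)
    (h2' : -2 - 4 * t + 3 * t * m ^ 2 + 2 * α * m - β = 0)
    (h3 : v + v ^ 3 - 2 * α * v ^ 2 - 4 * t * β * v = 8 * t ^ 2 * γ)
    (h3' : 1 + 3 * v ^ 2 - 4 * α * v - 4 * t * β = 0)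
    (h2ne : (2 : K) ≠ 0) (hwm : w + m ≠ 0) (hwv : 2 * t * w - v ≠ 0) (hmv : -(2 * t * m) - v ≠ 0) :
    α = 2 * t * (w - m) + v ∧ 4 * (w - m) = t * (w + m) ^ 3 ∧
      27 * t ^ 4 * (w + m) ^ 8 - 288 * t ^ 2 * (w + m) ^ 4 + 64 * (16 * t ^ 2 + 1) * (w + m) ^ 2
        - 256 = 0 := by
  -- the three critical points `w`, `-m`, `v / (2t)` are roots of `2t W³ - α W² + γ`
  have c1 : 2 * t * w ^ 3 - α * w ^ 2 + γ = 0 := by linear_combination w * h1' - h1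
  have c2 : -(2 * t * m ^ 3) - α * m ^ 2 + γ = 0 := by linear_combination -m * h2' + h2
  have c3 : v ^ 3 - α * v ^ 2 + 4 * t ^ 2 * γ = 0 := by
    apply mul_left_cancel₀ h2ne
    linear_combination v * h3' - h3
  have q1 : (2 * t * w) ^ 2 + 2 * t * w * v + v ^ 2 - α * (2 * t * w + v) = 0 := by
    apply (mul_eq_zero.1 (?_ : (2 * t * w - v) * _ = 0)).resolve_left hwv
    linear_combination 4 * t ^ 2 * c1 - c3
  have q2 : (2 * t * m) ^ 2 - 2 * t * m * v + v ^ 2 - α * (-(2 * t * m) + v) = 0 := by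
    apply (mul_eq_zero.1 (?_ : (-(2 * t * m) - v) * _ = 0)).resolve_left hmv
    linear_combination 4 * t ^ 2 * c2 - c3
  have hα : 2 * t * (w - m) + v - α = 0 := by
    apply (mul_eq_zero.1 (?_ : (2 * t * (w + m)) * _ = 0)).resolve_left
      (mul_ne_zero (mul_ne_zero h2ne ht) hwm)
    linear_combination q1 - q2
  obtain rfl : α = 2 * t * (w - m) + v := by linear_combination -hα
  -- the second elementary symmetric function of the critical points vanishes
  have e2 : v * (w - m) = 2 * t * (w * m) := by
    apply mul_left_cancel₀ (mul_ne_zero h2ne ht)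
    linear_combination -q1
  have hs : 4 * (w - m) = t * (w + m) ^ 3 := by
    linear_combination (w - m) * (h1' - h2') + 2 * (w + m) * e2
  refine ⟨rfl, hs, ?_⟩
  have hd : -4 * (16 * t ^ 2 + 1) * (w - m) ^ 2 - 27 * t ^ 2 * (w - m) ^ 4
      + 18 * t ^ 2 * (w - m) ^ 2 * (w + m) ^ 2 + t ^ 2 * (w + m) ^ 4 = 0 := by
    linear_combination 4 * (w - m) ^ 2 * (2 * t * (h1' + h2') - h3')
      - (16 * t * (w - m) ^ 2 + 4 * (v * (w - m) + 2 * t * (w * m))) * e2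
  apply mul_left_cancel₀ (pow_ne_zero 4 hwm)
  apply mul_left_cancel₀ (pow_ne_zero 2 ht)
  generalize w - m = s at hs hd
  generalize w + m = d at hs hd
  linear_combination -256 * hd - (4 * s + t * d ^ 3) * (64 * (16 * t ^ 2 + 1)
    + 27 * t ^ 2 * ((t * d ^ 3) ^ 2 + (4 * s) ^ 2) - 288 * t ^ 2 * d ^ 2) * hs

/-! ### Algebraicity -/

lemma isAlgebraic_iff_exists (f : PowerSeries ℚ) :
    IsAlgebraic ℚ[X] f ↔ ∃ P : ℚ[X][X], P ≠ 0 ∧ eval₂ coeToPowerSeries.ringHom f P = 0 := by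
  have h : (algebraMap ℚ[X] (PowerSeries ℚ)) = coeToPowerSeries.ringHom := by
    ext <;> simp [PowerSeries.algebraMap_apply']
  simp only [IsAlgebraic, aeval_def, h]

lemma isAlgebraic_coe (p : ℚ[X]) : IsAlgebraic ℚ[X] (p : PowerSeries ℚ) := by
  have := isAlgebraic_algebraMap (R := ℚ[X]) (A := PowerSeries ℚ) p
  simpa [PowerSeries.algebraMap_apply'] using this

lemma gesselGF10_eq : GesselGF10 = evalAt 1 serX := by
  ext n; simp [GesselGF10, evalAt, serX, xPoly_eval_one]

lemma gesselGF01_eq : GesselGF01 = evalAt 1 serY := by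
  ext n; simp [GesselGF01, evalAt, serY, yPoly_eval_one]

/-- `G(t;0,1) = d³/8` and `2 + 2t G(t;1,0) = d + t d³/4` for an algebraic series `d`. -/
lemma exists_parametrization : ∃ d : PowerSeries ℚ, IsAlgebraic ℚ[X] d ∧
    8 * GesselGF01 = d ^ 3 ∧ 4 * (2 + 2 * τ * GesselGF10) = τ * d ^ 3 + 4 * d := by
  obtain ⟨α, β, γ, w, m, v, hα, hw, hm, hv, h1, h1', h2, h2', h3, h3'⟩ := critical_values
  rw [gesselGF10_eq, gesselGF01_eq]
  have ht : τ ≠ 0 := PowerSeries.X_ne_zero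
  have h2ne : (2 : PowerSeries ℚ) ≠ 0 := by
    apply constantCoeff_ne_zero
    rw [show PowerSeries.constantCoeff (2 : PowerSeries ℚ) = 2 from map_ofNat _ 2]
    norm_num
  have hwm : w + m ≠ 0 := by
    apply constantCoeff_ne_zero
    rw [hw, hm]; simp
  have hwv : 2 * τ * w - v ≠ 0 := by
    apply constantCoeff_ne_zero
    rw [hv]; simp
  have hmv : -(2 * τ * m) - v ≠ 0 := by
    apply constantCoeff_ne_zero
    rw [hv]; simp
  obtain ⟨e1, e2, e3⟩ := elimination ht h1 h1' h2 h2' h3 h3' h2ne hwm hwv hmv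
  refine ⟨w + m, ?_, ?_, ?_⟩
  · rw [isAlgebraic_iff_exists]
    refine ⟨C (27 * X ^ 4) * X ^ 8 - C (288 * X ^ 2) * X ^ 4 + C (64 * (16 * X ^ 2 + 1)) * X ^ 2
      - C 256, fun h => ?_, ?_⟩
    · have h0 := congrArg (fun p => (p.eval 0).eval 0) h
      simp at h0
    · rw [← e3]
      simp only [eval₂_sub, eval₂_add, eval₂_mul, eval₂_pow, eval₂_C, eval₂_X, eval₂_ofNat, eval₂_one,
        map_mul, map_add, map_pow, map_one, map_ofNat, coeToPowerSeries.ringHom_apply, coe_X]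
  · apply mul_left_cancel₀ ht
    apply mul_left_cancel₀ ht
    linear_combination τ * e2 - 2 * (hα - e1 - hv)
  · linear_combination -8 * hw + e2

/-- Both `G(t;1,0)` and `G(t;0,1)` are algebraic. -/
theorem gesselGF10_and_gesselGF01_algebraic :
    (∃ P : Polynomial (Polynomial ℚ), P ≠ 0 ∧
      Polynomial.eval₂ Polynomial.coeToPowerSeries.ringHom GesselGF10 P = 0) ∧
    (∃ P : Polynomial (Polynomial ℚ), P ≠ 0 ∧
      Polynomial.eval₂ Polynomial.coeToPowerSeries.ringHom GesselGF01 P = 0) := by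
  rw [← isAlgebraic_iff_exists, ← isAlgebraic_iff_exists]
  obtain ⟨d, hd, h01, h10⟩ := exists_parametrization
  have hC : ∀ a : ℚ, IsAlgebraic ℚ[X] (PowerSeries.C a) := fun a => by
    simpa using isAlgebraic_coe (C a)
  have ht : IsAlgebraic ℚ[X] τ := by simpa using isAlgebraic_coe X
  have h4 : IsAlgebraic ℚ[X] (4 : PowerSeries ℚ) := by
    rw [show (4 : PowerSeries ℚ) = PowerSeries.C 4 from (map_ofNat _ 4).symm]
    exact hC 4
  have h8 : IsAlgebraic ℚ[X] (8 : PowerSeries ℚ) := by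
    rw [show (8 : PowerSeries ℚ) = PowerSeries.C 8 from (map_ofNat _ 8).symm]
    exact hC 8
  have hC8 : ∀ f : PowerSeries ℚ, PowerSeries.C (1 / 8) * (8 * f) = f := fun f => by
    rw [← mul_assoc, show (8 : PowerSeries ℚ) = PowerSeries.C 8 from (map_ofNat _ 8).symm, ← map_mul]
    norm_num
  constructor
  · have h : τ * GesselGF10 = PowerSeries.C (1 / 8) * (τ * d ^ 3 + 4 * d - 8) := by
      rw [← h10, ← hC8 (τ * GesselGF10)]
      ring
    refine IsAlgebraic.of_mul (mem_nonZeroDivisors_of_ne_zero PowerSeries.X_ne_zero) ht ?_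
    rw [h]
    exact (hC _).mul (((ht.mul (hd.pow 3)).add (h4.mul hd)).sub h8)
  · rw [← hC8 GesselGF01, h01]
    exact (hC _).mul (hd.pow 3)
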